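/- arXiv:2212.07260 — 2 statements merged into one kernel-verified Lean document; each statement's English description precedes it below -/
import Mathlib

section
/- Let B be a partition of ℕ×ℕ into infinitely many infinite sets. The following are equivalent: (1) ED is a P(OFin(B))-ideal; (2) ED ⊆↾ OFin(B); (3) ED ⊥ OFin(B); (4) both Fin×∅ and Sel are P(OFin(B))-ideals; (5) Fin×∅ ⊆↾ OFin(B) and Sel ⊆↾ OFin(B). -/
open Set

/-- An ideal on an (infinite) set: contains all finite sets, is proper,
closed under subsets and finite unions. -/
def IsIdeal {α : Type*} (I : Set (Set α)) : Prop :=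
  (∀ s : Set α, s.Finite → s ∈ I) ∧ (Set.univ : Set α) ∉ I ∧
  (∀ s t : Set α, s ∈ I → t ⊆ s → t ∈ I) ∧
  (∀ s t : Set α, s ∈ I → t ∈ I → s ∪ t ∈ I)

/-- `I` is a `P(J)`-ideal. -/
def IsPJIdeal {α : Type*} (I J : Set (Set α)) : Prop :=
  ∀ f : ℕ → Set α, (∀ n, f n ∈ I) → ∃ A ∈ I, ∀ n, f n \ A ∈ J

/-- Orthogonality of two ideals. -/
def Orth {α : Type*} (I J : Set (Set α)) : Prop :=
  ∃ A : Set α, A ∈ I ∧ Aᶜ ∈ J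

/-- `I ⊆↾ J` : the whole ideal `I` has a `J`-union in `I`. -/
def SubRestr {α : Type*} (I J : Set (Set α)) : Prop :=
  ∃ E ∈ I, ∀ A ∈ I, A \ E ∈ J

/-- A tall ideal. -/
def IsTall {α : Type*} (I : Set (Set α)) : Prop :=
  ∀ X : Set α, X.Infinite → ∃ A ∈ I, (X ∩ A).Infinite

/-- A nowhere tall ideal. -/
def NowhereTall {α : Type*} (J : Set (Set α)) : Prop :=
  ∀ A : Set α, A ∉ J → ∃ B ⊆ A, B.Infinite ∧
    (fun j => j ∩ B) '' J = {s : Set α | s ⊆ B ∧ s.Finite}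

/-- An almost disjoint family: infinite members, pairwise finite intersections. -/
def IsADFamily {α : Type*} (C : Set (Set α)) : Prop :=
  (∀ A ∈ C, A.Infinite) ∧ ∀ A ∈ C, ∀ B ∈ C, A ≠ B → (A ∩ B).Finite

/-- The ideal generated by a family `C` (together with the finite sets). -/
def genIdeal {α : Type*} (C : Set (Set α)) : Set (Set α) :=
  {A | ∃ F : Finset (Set α), ↑F ⊆ C ∧ (A \ ⋃₀ ↑F).Finite}

/-- The `n`-th vertical `{n} × ℕ` in `ℕ × ℕ`. -/
def Vert (n : ℕ) : Set (ℕ × ℕ) := {p | p.1 = n}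

/-- A partition of `ℕ × ℕ` into infinitely many infinite sets (indexed by `ℕ`). -/
def IsPartition (A : ℕ → Set (ℕ × ℕ)) : Prop :=
  (∀ n, (A n).Infinite) ∧ (∀ i j, i ≠ j → A i ∩ A j = ∅) ∧ (⋃ n, A n) = Set.univ

/-- `Fin(A)`: the ideal generated by the partition `A`. -/
def FinPart (A : ℕ → Set (ℕ × ℕ)) : Set (Set (ℕ × ℕ)) :=
  {X | ∃ F : Finset ℕ, (X \ ⋃ n ∈ F, A n).Finite}

/-- `OFin(A)`: sets with finite intersection with each member of `A`. -/
def OFinPart (A : ℕ → Set (ℕ × ℕ)) : Set (Set (ℕ × ℕ)) :=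
  {X | ∀ n, (X ∩ A n).Finite}

/-- `FinFin(A)`: the ideal generated by `Fin(A) ∪ OFin(A)`. -/
def FinFinPart (A : ℕ → Set (ℕ × ℕ)) : Set (Set (ℕ × ℕ)) :=
  {X | ∃ Y ∈ FinPart A, ∃ Z ∈ OFinPart A, X ⊆ Y ∪ Z}

/-- `Sel(A)`: sets meeting each member of `A` in at most `m` points, for some `m`. -/
def SelPart (A : ℕ → Set (ℕ × ℕ)) : Set (Set (ℕ × ℕ)) :=
  {X | ∃ m : ℕ, ∀ n, (X ∩ A n).encard ≤ (m : ℕ∞)}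

/-- `ED(A)`: sets meeting all but finitely many members of `A` in at most `m` points. -/
def EDPart (A : ℕ → Set (ℕ × ℕ)) : Set (Set (ℕ × ℕ)) :=
  {X | ∃ m : ℕ, {n | (m : ℕ∞) < (X ∩ A n).encard}.Finite}

/-- The ideal `Sel` on `ℕ × ℕ` (w.r.t. the vertical partition). -/
def SelI : Set (Set (ℕ × ℕ)) := SelPart Vert

/-- The ideal `ED` on `ℕ × ℕ` (w.r.t. the vertical partition). -/
def EDI : Set (Set (ℕ × ℕ)) := EDPart Vert

/-- The ideal `Fin × ∅` on `ℕ × ℕ`, generated by the verticals. -/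
def FinVert : Set (Set (ℕ × ℕ)) := FinPart Vert

/-!
`ED` consists of the unions of a set in `Fin × ∅` with a set in `Sel`, and every set of the first
kind meets every set of the second kind in a finite set. So a witness `Y ∪ Z` of
`ED ⊥ OFin(B)` splits into witnesses of both relations in (5): if `X ∈ Fin × ∅`, then `X \ Y` meets
`B k` only inside the finite sets `X ∩ Z` and `B k \ (Y ∪ Z)`, and symmetrically for `X ∈ Sel`.

Conversely, orthogonality follows from the `P`-property as soon as it applies to the sequence `B`.
If it holds for `Sel` or `ED`, then `B k ∈ ED`: choose `Y m ⊆ B k` with as many points as possible,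
but at most `m`, in each vertical. Some `C ∈ ED` contains each `Y m` up to finitely many points, and
if `C` has at most `m` points in almost every vertical, then `Y (m + 1)`, hence `B k`, has at most
`m` points in almost every vertical. In (4), removing a set in `Fin × ∅` that contains each vertical
up to a set in `OFin(B)` turns every `B k` into a member of `Sel`.
-/

open scoped Function

theorem finite_setOf_inter_nonempty {ι α : Type*} {A : ι → Set α} (hA : Pairwise (Disjoint on A))
    {s : Set α} (hs : s.Finite) : {i | (s ∩ A i).Nonempty}.Finite := by
  have hsub : ∀ p, {i | p ∈ A i}.Subsingleton := fun p i hi j hj =>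
    hA.eq (not_disjoint_iff.2 ⟨p, hi, hj⟩)
  refine (hs.biUnion fun p _ => (hsub p).finite).subset ?_
  rintro i ⟨p, hps, hpi⟩
  exact mem_biUnion hps hpi

theorem exists_subset_encard_inter_eq_min {ι α : Type*} {A : ι → Set α}
    (hA : Pairwise (Disjoint on A)) (X : Set α) (m : ℕ∞) :
    ∃ Y ⊆ X, ∀ i, (Y ∩ A i).encard = min m (X ∩ A i).encard := by
  choose t htX htm using fun i =>
    exists_subset_encard_eq (min_le_right m (X ∩ A i).encard)
  refine ⟨⋃ i, t i, iUnion_subset fun i => (htX i).trans inter_subset_left, fun i => ?_⟩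
  have hinter : (⋃ j, t j) ∩ A i = t i := by
    refine Subset.antisymm ?_ (subset_inter (subset_iUnion t i) ((htX i).trans inter_subset_right))
    rintro p ⟨hp, hpi⟩
    obtain ⟨j, hpj⟩ := mem_iUnion.1 hp
    exact hA.eq (not_disjoint_iff.2 ⟨p, (htX j hpj).2, hpi⟩) ▸ hpj
  rw [hinter, htm]

theorem SubRestr.isPJIdeal {α : Type*} {I J : Set (Set α)} (h : SubRestr I J) :
    IsPJIdeal I J := by
  obtain ⟨E, hE, hdiff⟩ := h
  exact fun f hf => ⟨E, hE, fun n => hdiff _ (hf n)⟩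

theorem Orth.subRestr {α : Type*} {I J : Set (Set α)} (hJ : IsLowerSet J) (h : Orth I J) :
    SubRestr I J := by
  obtain ⟨E, hE, hcompl⟩ := h
  exact ⟨E, hE, fun X _ => hJ (sdiff_subset_compl X E) hcompl⟩

section OFinPart

variable {B : ℕ → Set (ℕ × ℕ)} {I : Set (Set (ℕ × ℕ))}

theorem isLowerSet_oFinPart : IsLowerSet (OFinPart B) :=
  fun _ _ hYX hX k => (hX k).subset (inter_subset_inter_left _ hYX)

theorem finite_of_mem_oFinPart {X : Set (ℕ × ℕ)} {k : ℕ} (hX : X ∈ OFinPart B) (hXB : X ⊆ B k) :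
    X.Finite := by
  simpa only [inter_eq_left.2 hXB] using hX k

theorem compl_mem_oFinPart_iff {C : Set (ℕ × ℕ)} :
    Cᶜ ∈ OFinPart B ↔ ∀ k, (B k \ C).Finite := by
  simp only [OFinPart, mem_ofPred_eq, sdiff_eq_compl_inter]

theorem IsPJIdeal.orth (h : IsPJIdeal I (OFinPart B)) (hB : ∀ k, B k ∈ I) :
    Orth I (OFinPart B) := by
  obtain ⟨C, hC, hdiff⟩ := h B hB
  exact ⟨C, hC, compl_mem_oFinPart_iff.2 fun k => finite_of_mem_oFinPart (hdiff k) sdiff_subset⟩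

theorem subRestr_of_compl_union_mem_oFinPart {Y Z : Set (ℕ × ℕ)} (hY : Y ∈ I)
    (hZ : ∀ X ∈ I, (X ∩ Z).Finite) (hYZ : (Y ∪ Z)ᶜ ∈ OFinPart B) :
    SubRestr I (OFinPart B) := by
  refine ⟨Y, hY, fun X hX k => ((hZ X hX).union (hYZ k)).subset ?_⟩
  rintro p ⟨⟨hpX, hpY⟩, hpB⟩
  by_cases hpZ : p ∈ Z
  · exact Or.inl ⟨hpX, hpZ⟩
  · exact Or.inr ⟨fun hp => hp.elim hpY hpZ, hpB⟩

end OFinPart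

section Family

variable {A B : ℕ → Set (ℕ × ℕ)} {X Y Z : Set (ℕ × ℕ)}

theorem mem_finPart_self (n : ℕ) : A n ∈ FinPart A :=
  ⟨{n}, by simp⟩

theorem isLowerSet_finPart : IsLowerSet (FinPart A) :=
  fun _ _ hYX ⟨F, hF⟩ => ⟨F, hF.subset (sdiff_subset_sdiff_left hYX)⟩

theorem finite_inter_of_mem_selPart (hX : X ∈ SelPart A) (n : ℕ) : (X ∩ A n).Finite := by
  obtain ⟨m, hm⟩ := hX
  exact finite_of_encard_le_coe (hm n)

theorem finite_of_mem_finPart (hX : X ∈ FinPart A) (hfin : ∀ n, (X ∩ A n).Finite) :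
    X.Finite := by
  obtain ⟨F, hF⟩ := hX
  have hF' : (X ∩ ⋃ n ∈ F, A n).Finite := by
    rw [inter_iUnion₂]
    exact F.finite_toSet.biUnion fun n _ => hfin n
  exact inter_union_sdiff X (⋃ n ∈ F, A n) ▸ hF'.union hF

theorem finite_inter_of_mem_finPart_of_mem_selPart (hY : Y ∈ FinPart A) (hZ : Z ∈ SelPart A) :
    (Y ∩ Z).Finite :=
  finite_of_mem_finPart (isLowerSet_finPart inter_subset_left hY) fun n =>
    (finite_inter_of_mem_selPart hZ n).subset (inter_subset_inter_left _ inter_subset_right)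

theorem union_mem_selPart_of_finite (hY : Y.Finite) (hZ : Z ∈ SelPart A) :
    Y ∪ Z ∈ SelPart A := by
  obtain ⟨m, hm⟩ := hZ
  refine ⟨Y.ncard + m, fun n => ?_⟩
  calc ((Y ∪ Z) ∩ A n).encard
      ≤ (Y ∪ Z ∩ A n).encard := encard_le_encard (by grind)
    _ ≤ Y.encard + (Z ∩ A n).encard := encard_union_le _ _
    _ ≤ (Y.ncard + m : ℕ) := by
        rw [Nat.cast_add, hY.cast_ncard_eq]
        gcongr
        exact hm n

theorem selPart_subset_edPart : SelPart A ⊆ EDPart A := by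
  rintro X ⟨m, hm⟩
  exact ⟨m, by simp only [(hm _).not_gt, ofPred_false, finite_empty]⟩

theorem isLowerSet_edPart : IsLowerSet (EDPart A) :=
  fun _ _ hYX ⟨m, hm⟩ => ⟨m, hm.subset fun _ hn =>
    lt_of_lt_of_le hn (encard_le_encard (inter_subset_inter_left _ hYX))⟩

theorem exists_finPart_union_selPart_of_mem_edPart (hX : X ∈ EDPart A) :
    ∃ Y ∈ FinPart A, ∃ Z ∈ SelPart A, Y ∪ Z = X := by
  obtain ⟨m, hm⟩ := hX
  let W := ⋃ n ∈ hm.toFinset, A n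
  refine ⟨X ∩ W, ⟨hm.toFinset, by simp [W, sdiff_eq_empty.2 inter_subset_right]⟩,
    X \ W, ⟨m, fun n => ?_⟩, inter_union_sdiff X W⟩
  by_cases hn : (m : ℕ∞) < (X ∩ A n).encard
  · have hnW : A n ⊆ W := subset_biUnion_of_mem (u := A) (hm.mem_toFinset.2 hn)
    have hempty : X \ W ∩ A n = ∅ := (disjoint_sdiff_left.mono_right hnW).inter_eq
    simp [hempty]
  · exact (encard_le_encard (inter_subset_inter_left _ sdiff_subset)).trans (not_lt.1 hn)

theorem mem_selPart_of_mem_edPart_of_finite (hX : X ∈ EDPart A) (hfin : ∀ n, (X ∩ A n).Finite) :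
    X ∈ SelPart A := by
  obtain ⟨Y, hY, Z, hZ, rfl⟩ := exists_finPart_union_selPart_of_mem_edPart hX
  have hYfin : Y.Finite := finite_of_mem_finPart hY fun n =>
    (hfin n).subset (inter_subset_inter_left _ subset_union_left)
  exact union_mem_selPart_of_finite hYfin hZ

theorem Orth.subRestr_finPart_and_selPart (h : Orth (EDPart A) (OFinPart B)) :
    SubRestr (FinPart A) (OFinPart B) ∧ SubRestr (SelPart A) (OFinPart B) := by
  obtain ⟨C, hC, hcompl⟩ := h
  obtain ⟨Y, hY, Z, hZ, rfl⟩ := exists_finPart_union_selPart_of_mem_edPart hC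
  constructor
  · exact subRestr_of_compl_union_mem_oFinPart hY
      (fun X hX => finite_inter_of_mem_finPart_of_mem_selPart hX hZ) hcompl
  · refine subRestr_of_compl_union_mem_oFinPart hZ (fun X hX => ?_) (union_comm Y Z ▸ hcompl)
    exact inter_comm Y X ▸ finite_inter_of_mem_finPart_of_mem_selPart hY hX

theorem union_mem_edPart (hA : Pairwise (Disjoint on A)) (hY : Y ∈ FinPart A)
    (hZ : Z ∈ SelPart A) : Y ∪ Z ∈ EDPart A := by
  obtain ⟨F, hF⟩ := hY
  obtain ⟨m, hm⟩ := union_mem_selPart_of_finite hF hZ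
  refine ⟨m, F.finite_toSet.subset fun n hn => ?_⟩
  by_contra hnF
  have hdisj : Disjoint (⋃ i ∈ F, A i) (A n) :=
    disjoint_iUnion₂_left.2 fun i hi => hA fun hin => hnF (hin ▸ hi)
  have hsub : (Y ∪ Z) ∩ A n ⊆ (Y \ (⋃ i ∈ F, A i) ∪ Z) ∩ A n := by
    rintro p ⟨hpY | hpZ, hpn⟩
    · exact ⟨Or.inl ⟨hpY, fun hp => hdisj.notMem_of_mem_left hp hpn⟩, hpn⟩
    · exact ⟨Or.inr hpZ, hpn⟩
  exact hn.not_ge ((encard_le_encard hsub).trans (hm n))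

theorem IsPJIdeal.mem_edPart (hA : Pairwise (Disjoint on A)) {I : Set (Set (ℕ × ℕ))}
    (h : IsPJIdeal I (OFinPart B)) (hSel : SelPart A ⊆ I) (hED : I ⊆ EDPart A) (k : ℕ) :
    B k ∈ EDPart A := by
  choose Y hYB hYcard using fun m : ℕ => exists_subset_encard_inter_eq_min hA (B k) m
  have hYSel : ∀ m, Y m ∈ SelPart A := fun m => ⟨m, fun n => hYcard m n ▸ min_le_left _ _⟩
  obtain ⟨C, hC, hdiff⟩ := h Y fun m => hSel (hYSel m)
  obtain ⟨m, hm⟩ := hED hC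
  have hfin : (Y (m + 1) \ C).Finite :=
    finite_of_mem_oFinPart (hdiff (m + 1)) (sdiff_subset.trans (hYB (m + 1)))
  refine ⟨m, (hm.union (finite_setOf_inter_nonempty hA hfin)).subset fun n hn => ?_⟩
  by_contra hnot
  obtain ⟨hCn, hYC⟩ := not_or.1 hnot
  have hsub : Y (m + 1) ∩ A n ⊆ C ∩ A n := fun p hp =>
    ⟨by_contra fun hpC => hYC ⟨p, ⟨hp.1, hpC⟩, hp.2⟩, hp.2⟩
  have hcard : (Y (m + 1) ∩ A n).encard = m + 1 := by
    rw [hYcard, Nat.cast_succ, min_eq_left (Order.add_one_le_of_lt hn)]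
  have hle : (m : ℕ∞) + 1 ≤ m := hcard ▸ (encard_le_encard hsub).trans (not_lt.1 hCn)
  exact absurd hle (by norm_cast; lia)

theorem orth_edPart_of_isPJIdeal (hA : Pairwise (Disjoint on A))
    (hFin : IsPJIdeal (FinPart A) (OFinPart B)) (hSel : IsPJIdeal (SelPart A) (OFinPart B)) :
    Orth (EDPart A) (OFinPart B) := by
  obtain ⟨E, hE, hEdiff⟩ := hFin A mem_finPart_self
  have hBSel : ∀ k, B k \ E ∈ SelPart A := fun k => by
    have hBED := hSel.mem_edPart hA subset_rfl selPart_subset_edPart k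
    refine mem_selPart_of_mem_edPart_of_finite (isLowerSet_edPart sdiff_subset hBED) fun n => ?_
    exact (hEdiff n k).subset fun p hp => ⟨⟨hp.2, hp.1.2⟩, hp.1.1⟩
  obtain ⟨S, hS, hSdiff⟩ := hSel _ hBSel
  refine ⟨E ∪ S, union_mem_edPart hA hE hS, compl_mem_oFinPart_iff.2 fun k => ?_⟩
  rw [← sdiff_sdiff]
  exact finite_of_mem_oFinPart (hSdiff k) (sdiff_subset.trans sdiff_subset)

end Family

theorem pairwise_disjoint_vert : Pairwise (Disjoint on Vert) :=
  fun _ _ hij => disjoint_left.2 fun _ hi hj => hij (hi.symm.trans hj)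

theorem stmt18_general (A B : ℕ → Set (ℕ × ℕ)) (hA : Pairwise (Disjoint on A)) :
    List.TFAE [
      IsPJIdeal (EDPart A) (OFinPart B),
      SubRestr (EDPart A) (OFinPart B),
      Orth (EDPart A) (OFinPart B),
      IsPJIdeal (FinPart A) (OFinPart B) ∧ IsPJIdeal (SelPart A) (OFinPart B),
      SubRestr (FinPart A) (OFinPart B) ∧ SubRestr (SelPart A) (OFinPart B)
    ] := by
  tfae_have 1 → 3 := fun h => h.orth (h.mem_edPart hA selPart_subset_edPart subset_rfl)
  tfae_have 3 → 2 := Orth.subRestr isLowerSet_oFinPart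
  tfae_have 2 → 1 := SubRestr.isPJIdeal
  tfae_have 3 → 5 := Orth.subRestr_finPart_and_selPart
  tfae_have 5 → 4 := fun h => ⟨h.1.isPJIdeal, h.2.isPJIdeal⟩
  tfae_have 4 → 3 := fun h => orth_edPart_of_isPJIdeal hA h.1 h.2
  tfae_finish

theorem stmt18 (B : ℕ → Set (ℕ × ℕ)) (hB : IsPartition B) :
    List.TFAE [
      IsPJIdeal EDI (OFinPart B),
      SubRestr EDI (OFinPart B),
      Orth EDI (OFinPart B),
      IsPJIdeal FinVert (OFinPart B) ∧ IsPJIdeal SelI (OFinPart B),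
      SubRestr FinVert (OFinPart B) ∧ SubRestr SelI (OFinPart B)
    ] :=
  stmt18_general Vert B pairwise_disjoint_vert
end

section
/- There exists a partition E of ℕ×ℕ into infinitely many infinite sets such that: (a) for every k ≥ 3 there is no (k,k)-tower of E-monochromatic functions; yet (b) Sel is not a P(Sel(E))-ideal, and moreover Sel is not a P(ED(E))-ideal. -/
open Set

/-- A subset of `ℕ × ℕ` is the graph of a partial function from `ℕ` to `ℕ`. -/
def IsPFunGraph (g : Set (ℕ × ℕ)) : Prop :=
  ∀ p ∈ g, ∀ q ∈ g, p.1 = q.1 → p = q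

/-- The domain of (the graph of) a partial function. -/
def pdom (g : Set (ℕ × ℕ)) : Set ℕ := Prod.fst '' g

/-- The graph of a total function `ℕ → ℕ`. -/
def totGraph (f : ℕ → ℕ) : Set (ℕ × ℕ) := {p | f p.1 = p.2}

/-- A `(κ, lam)`-tower of functions: `lam` many pairwise disjoint nonempty
partial functions from `ℕ` to `ℕ`, all with the same domain of cardinality `κ`. -/
def IsTower (κ lam : ℕ∞) (T : Set (Set (ℕ × ℕ))) : Prop :=
  T.encard = lam ∧
  (∀ g ∈ T, IsPFunGraph g ∧ g.Nonempty) ∧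
  (∃ a : Set ℕ, a.encard = κ ∧ ∀ g ∈ T, pdom g = a) ∧
  (∀ g ∈ T, ∀ g' ∈ T, g ≠ g' → g ∩ g' = ∅)

/-- A `(κ, lam)`-tower of `B`-monochromatic functions. -/
def IsMonoTower (B : ℕ → Set (ℕ × ℕ)) (κ lam : ℕ∞) (T : Set (Set (ℕ × ℕ))) : Prop :=
  IsTower κ lam T ∧ ∀ g ∈ T, ∃ n, g ⊆ B n

/-- The (indices of the) colors used by a tower: `C_T`. -/
def towerColors (B : ℕ → Set (ℕ × ℕ)) (T : Set (Set (ℕ × ℕ))) : Set ℕ :=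
  {n | ∃ g ∈ T, g ⊆ B n}

/-- The domain of a tower: `dom(T)`. -/
def towerDom (T : Set (Set (ℕ × ℕ))) : Set ℕ := ⋃ g ∈ T, pdom g

/-- A sequence of essentially different towers: pairwise disjoint color sets
and pairwise disjoint domains. -/
def EssDiff (B : ℕ → Set (ℕ × ℕ)) (T : ℕ → Set (Set (ℕ × ℕ))) : Prop :=
  ∀ i j, i ≠ j → towerColors B (T i) ∩ towerColors B (T j) = ∅ ∧
    towerDom (T i) ∩ towerDom (T j) = ∅

/-!
Label the columns by the points `x` of `⨁_ℕ ℕ`, and let the colour of the `i`-th point of column `x`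
be the line through `x` parallel to the `i`-th axis. Two columns that share their colours in two
different ways would be two points lying on two common lines, so they coincide; this excludes all
towers of size at least `2 × 2`. One further monochromatic column per line makes the colour classes
infinite.

If `Sel` were a `P(ED(E))`-ideal, then applying this to the constant functions would produce a
function with finite range whose graph is in `ED(E)`. Such a function chooses, for each point `x`,
one of the axis-parallel lines through `x` with direction in a finite set `D`. In a box of side `L`
over `D` there are `L ^ |D|` points but only `|D| * L ^ (|D| - 1)` such lines, so for large `L` some
line is chosen by many of its points. Varying a coordinate outside `D` gives infinitely many such
lines.
-/

section AxisLines

variable {ι M : Type*}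

lemma prod_card_update_singleton [DecidableEq ι] {D : Finset ι} {i₀ : ι} (hi₀ : i₀ ∉ D)
    {W : Finset M} {a : M} :
    ∏ i ∈ insert i₀ D, (Function.update (fun _ => W) i₀ {a} i).card = W.card ^ D.card := by
  rw [Finset.prod_insert hi₀, Function.update_self, Finset.card_singleton, one_mul]
  refine Finset.prod_eq_pow_card fun i hi => ?_
  rw [Function.update_of_ne (ne_of_mem_of_not_mem hi hi₀)]

variable [Zero M]

/-- Names for the lines of the space `ι →₀ M` that are parallel to an axis: the line through `x` in
direction `i` is `(i, x.erase i)`. Pairs `(i, y)` with `y i ≠ 0` name no line; they are kept as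
harmless extra elements. -/
abbrev AxisLine (ι M : Type*) [Zero M] : Type _ := ι × (ι →₀ M)

/-- The line through the point `x` parallel to the `i`-th axis. -/
noncomputable def axisLineThrough (x : ι →₀ M) (i : ι) : AxisLine ι M := (i, x.erase i)

lemma axisLineThrough_eq_iff {x y : ι →₀ M} {i j : ι} :
    axisLineThrough x i = axisLineThrough y j ↔ i = j ∧ x.erase i = y.erase j :=
  Prod.mk_inj

lemma eq_of_axisLineThrough_eq {x y : ι →₀ M} {i j : ι} (hij : i ≠ j)
    (hi : axisLineThrough x i = axisLineThrough y i)
    (hj : axisLineThrough x j = axisLineThrough y j) : x = y := by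
  have eq_of_ne {k l : ι} (hkl : l ≠ k) (hk : axisLineThrough x k = axisLineThrough y k) :
      x l = y l := by
    simpa only [Finsupp.erase_ne hkl] using
      DFunLike.congr_fun (axisLineThrough_eq_iff.mp hk).2 l
  ext l
  rcases eq_or_ne l i with rfl | hl
  · exact eq_of_ne hij hj
  · exact eq_of_ne hl hi

lemma erase_mem_finsupp_erase [DecidableEq ι] {s : Finset ι} {V : ι → Finset M} {x : ι →₀ M}
    (hx : x ∈ s.finsupp V) (i : ι) : x.erase i ∈ (s.erase i).finsupp V := by
  rw [Finset.mem_finsupp_iff] at hx ⊢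
  refine ⟨?_, fun l hl => ?_⟩
  · rw [Finsupp.support_erase]
    exact Finset.erase_subset_erase i hx.1
  · rw [Finsupp.erase_ne (Finset.ne_of_mem_erase hl)]
    exact hx.2 l (Finset.mem_of_mem_erase hl)

lemma exists_axisLine_lt_card_of_mul_lt_card_box [DecidableEq ι] [DecidableEq M]
    {r : (ι →₀ M) → ι} {D s : Finset ι} {V : ι → Finset M} {n : ℕ} (hr : ∀ x, r x ∈ D)
    (hn : (∑ j ∈ D, ∏ i ∈ s.erase j, (V i).card) * n < ∏ i ∈ s, (V i).card) :
    ∃ ℓ, n < ((s.finsupp V).filter fun x => axisLineThrough x (r x) = ℓ).card := by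
  let lines : Finset (AxisLine ι M) :=
    D.biUnion fun j => ((s.erase j).finsupp V).map (Function.Embedding.sectR j _)
  have card_lines_le : lines.card ≤ ∑ j ∈ D, ∏ i ∈ s.erase j, (V i).card := by
    refine Finset.card_biUnion_le.trans_eq (Finset.sum_congr rfl fun j _ => ?_)
    rw [Finset.card_map, Finset.card_finsupp]
  have mem_lines : ∀ x ∈ s.finsupp V, axisLineThrough x (r x) ∈ lines := fun x hx =>
    Finset.mem_biUnion.mpr ⟨r x, hr x,
      Finset.mem_map_of_mem _ (erase_mem_finsupp_erase hx (r x))⟩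
  have card_mul_lt : lines.card * n < (s.finsupp V).card := by
    rw [Finset.card_finsupp]
    exact (Nat.mul_le_mul_right n card_lines_le).trans_lt hn
  obtain ⟨ℓ, -, hℓ⟩ := Finset.exists_lt_card_fiber_of_mul_lt_card_of_maps_to mem_lines card_mul_lt
  exact ⟨ℓ, hℓ⟩

lemma exists_axisLine_lt_encard_and_apply_eq [Infinite M] {r : (ι →₀ M) → ι} {D : Finset ι}
    (hr : ∀ x, r x ∈ D) {i₀ : ι} (hi₀ : i₀ ∉ D) (n : ℕ) (a : M) :
    ∃ ℓ : AxisLine ι M, (n : ℕ∞) < {x | axisLineThrough x (r x) = ℓ}.encard ∧ ℓ.2 i₀ = a := by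
  classical
  obtain ⟨W, hW⟩ := Infinite.exists_subset_card_eq M (D.card * n + 1)
  let s := insert i₀ D
  let V := Function.update (fun _ => W) i₀ {a}
  have card_lines : ∑ j ∈ D, ∏ i ∈ s.erase j, (V i).card = D.card * W.card ^ (D.card - 1) := by
    rw [← smul_eq_mul]
    refine Finset.sum_eq_card_nsmul fun j hj => ?_
    rw [Finset.erase_insert_of_ne (ne_of_mem_of_not_mem hj hi₀).symm,
      prod_card_update_singleton fun h => hi₀ (Finset.mem_of_mem_erase h),
      Finset.card_erase_of_mem hj]
  have D_card_ne_zero : D.card ≠ 0 := Finset.card_ne_zero_of_mem (hr 0)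
  obtain ⟨ℓ, hℓ⟩ := exists_axisLine_lt_card_of_mul_lt_card_box (s := s) (V := V) (n := n) hr <| by
    calc (∑ j ∈ D, ∏ i ∈ s.erase j, (V i).card) * n
        = W.card ^ (D.card - 1) * (D.card * n) := by rw [card_lines]; ring
      _ < W.card ^ (D.card - 1) * W.card := by
          rw [hW]
          exact Nat.mul_lt_mul_of_pos_left (Nat.lt_succ_self _) (by positivity)
      _ = ∏ i ∈ s, (V i).card := by
          rw [pow_sub_one_mul D_card_ne_zero, prod_card_update_singleton hi₀]
  refine ⟨ℓ, ?_, ?_⟩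
  · refine (Nat.cast_lt.mpr hℓ).trans_le ?_
    rw [← encard_coe_eq_coe_finsetCard]
    exact encard_le_encard fun x hx => (Finset.mem_filter.mp hx).2
  · obtain ⟨x, hx⟩ := Finset.card_pos.mp (Nat.zero_lt_of_lt hℓ)
    obtain ⟨hx_box, rfl⟩ := Finset.mem_filter.mp hx
    have hx_i₀ := (Finset.mem_finsupp_iff.mp hx_box).2 i₀ (Finset.mem_insert_self i₀ D)
    simpa [V, axisLineThrough, Finsupp.erase_ne (ne_of_mem_of_not_mem (hr x) hi₀).symm] using hx_i₀

lemma infinite_setOf_lt_encard_axisLineThrough_eq [Infinite ι] [Infinite M] {r : (ι →₀ M) → ι}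
    (hr : (range r).Finite) (n : ℕ) :
    {ℓ : AxisLine ι M | (n : ℕ∞) < {x | axisLineThrough x (r x) = ℓ}.encard}.Infinite := by
  obtain ⟨i₀, hi₀⟩ := Infinite.exists_notMem_finset hr.toFinset
  choose ℓ ℓ_rich ℓ_apply using
    exists_axisLine_lt_encard_and_apply_eq (fun x => hr.mem_toFinset.mpr (mem_range_self x)) hi₀ n
  have ℓ_injective : Function.Injective ℓ := fun a b hab => by
    rw [← ℓ_apply a, ← ℓ_apply b, hab]
  exact infinite_of_injective_forall_mem ℓ_injective ℓ_rich

end AxisLines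

section Towers

variable {B : ℕ → Set (ℕ × ℕ)} {κ lam : ℕ∞} {T : Set (Set (ℕ × ℕ))}

lemma IsMonoTower.exists_two_columns (hT : IsMonoTower B κ lam T) (hκ : 1 < κ) (hlam : 1 < lam) :
    ∃ x y p q p' q' n n', x ≠ y ∧ p ≠ p' ∧ q ≠ q' ∧
      (x, p) ∈ B n ∧ (y, q) ∈ B n ∧ (x, p') ∈ B n' ∧ (y, q') ∈ B n' := by
  obtain ⟨⟨card_T, -, ⟨a, card_a, dom_eq⟩, disj⟩, mono⟩ := hT
  obtain ⟨g, g', hg, hg', hne⟩ := one_lt_encard_iff.mp (card_T ▸ hlam)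
  obtain ⟨x, y, hx, hy, hxy⟩ := one_lt_encard_iff.mp (card_a ▸ hκ)
  have exists_value : ∀ h ∈ T, ∀ z ∈ a, ∃ p, (z, p) ∈ h := fun h hh z hz => by
    obtain ⟨⟨_, p⟩, hp, rfl⟩ := (dom_eq h hh).symm ▸ hz
    exact ⟨p, hp⟩
  have values_ne {z p p' : ℕ} (hp : (z, p) ∈ g) (hp' : (z, p') ∈ g') : p ≠ p' := by
    rintro rfl
    exact (disj g hg g' hg' hne).subset ⟨hp, hp'⟩
  obtain ⟨p, hp⟩ := exists_value g hg x hx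
  obtain ⟨q, hq⟩ := exists_value g hg y hy
  obtain ⟨p', hp'⟩ := exists_value g' hg' x hx
  obtain ⟨q', hq'⟩ := exists_value g' hg' y hy
  obtain ⟨n, hn⟩ := mono g hg
  obtain ⟨n', hn'⟩ := mono g' hg'
  exact ⟨x, y, p, q, p', q', n, n', hxy, values_ne hp hp', values_ne hq hq',
    hn hp, hn hq, hn' hp', hn' hq'⟩

end Towers

section Ideals

lemma IsPJIdeal.mono {α : Type*} {I J J' : Set (Set α)} (hI : IsPJIdeal I J) (hJ : J ⊆ J') :
    IsPJIdeal I J' := fun f hf =>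
  let ⟨A, hA, hfA⟩ := hI f hf
  ⟨A, hA, fun n => hJ (hfA n)⟩

lemma SelPart_subset_EDPart (A : ℕ → Set (ℕ × ℕ)) : SelPart A ⊆ EDPart A := by
  rintro X ⟨m, hm⟩
  exact ⟨m, finite_empty.subset fun n hn => (hm n).not_gt hn⟩

lemma isLowerSet_EDPart (A : ℕ → Set (ℕ × ℕ)) : IsLowerSet (EDPart A) := by
  rintro X Y hYX ⟨m, hm⟩
  exact ⟨m, hm.subset fun n hn => hn.trans_le (encard_le_encard (inter_subset_inter_left _ hYX))⟩

lemma supClosed_EDPart (A : ℕ → Set (ℕ × ℕ)) : SupClosed (EDPart A) := by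
  rintro X ⟨m, hm⟩ Y ⟨m', hm'⟩
  refine ⟨m + m', (hm.union hm').subset fun n hn => ?_⟩
  by_contra h
  rw [mem_union, not_or] at h
  refine (mem_ofPred.mp hn).not_ge ?_
  calc ((X ∪ Y) ∩ A n).encard ≤ (X ∩ A n).encard + (Y ∩ A n).encard := by
        rw [union_inter_distrib_right]; exact encard_union_le _ _
    _ ≤ m + m' := add_le_add (not_lt.mp h.1) (not_lt.mp h.2)
    _ = ((m + m' : ℕ) : ℕ∞) := (Nat.cast_add m m').symm

lemma totGraph_mem_SelI (f : ℕ → ℕ) : totGraph f ∈ SelI := by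
  refine ⟨1, fun k => encard_le_one_iff.mpr ?_⟩
  rintro p q ⟨hp, hpk⟩ ⟨hq, hqk⟩
  have fst_eq : p.1 = q.1 := hpk.trans hqk.symm
  exact Prod.ext fst_eq (hp.symm.trans ((congrArg f fst_eq).trans hq))

lemma exists_le_notMem_of_mem_SelI {A : Set (ℕ × ℕ)} (hA : A ∈ SelI) :
    ∃ m, ∀ k, ∃ j ≤ m, (k, j) ∉ A := by
  obtain ⟨m, hm⟩ := hA
  refine ⟨m, fun k => ?_⟩
  by_contra! h
  have image_subset : Prod.mk k '' Iic m ⊆ A ∩ Vert k :=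
    image_subset_iff.mpr fun j hj => ⟨h j hj, rfl⟩
  have card_image : (Prod.mk k '' Iic m).encard = (m + 1 : ℕ) := by
    rw [(Prod.mk_right_injective k).encard_image, ← Finset.coe_Iic, encard_coe_eq_coe_finsetCard,
      Nat.card_Iic]
  have : ((m + 1 : ℕ) : ℕ∞) ≤ m := card_image ▸ (encard_le_encard image_subset).trans (hm k)
  exact Nat.not_succ_le_self m (Nat.cast_le.mp this)

lemma IsPJIdeal.exists_finite_range_totGraph_mem {J : Set (Set (ℕ × ℕ))} (hP : IsPJIdeal SelI J)
    (hlower : IsLowerSet J) (hsup : SupClosed J) :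
    ∃ g : ℕ → ℕ, (range g).Finite ∧ totGraph g ∈ J := by
  obtain ⟨A, hA, hJ⟩ := hP (fun j => totGraph fun _ => j) fun j => totGraph_mem_SelI _
  obtain ⟨m, hm⟩ := exists_le_notMem_of_mem_SelI hA
  choose g g_le g_notMem using hm
  refine ⟨g, (finite_Iic m).subset (range_subset_iff.mpr g_le), ?_⟩
  have union_mem : (⋃ j ∈ Iic m, totGraph (fun _ => j) \ A) ∈ J :=
    hsup.biSup_mem_of_nonempty (finite_Iic m) nonempty_Iic fun j _ => hJ j
  refine hlower ?_ union_mem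
  rintro ⟨k, j⟩ (rfl : g k = j)
  exact mem_biUnion (g_le k) ⟨rfl, g_notMem k⟩

end Ideals

section LinePartition

/-- Labels for the columns of `ℕ × ℕ`: a column is labelled either by a point of `ℕ →₀ ℕ` or by an
axis-parallel line. -/
abbrev ColumnLabel : Type := (ℕ →₀ ℕ) ⊕ AxisLine ℕ ℕ

/-- The colour of the `i`-th entry of a column: in the column of a point `x`, the line through `x`
in direction `i`; in the column of a line `ℓ`, always `ℓ`, making every colour class infinite. -/
noncomputable def columnColor : ColumnLabel → ℕ → AxisLine ℕ ℕ
  | Sum.inl x, i => axisLineThrough x i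
  | Sum.inr ℓ, _ => ℓ

lemma columnColor_inl_injective (x : ℕ →₀ ℕ) : Function.Injective (columnColor (Sum.inl x)) :=
  fun _ _ h => (axisLineThrough_eq_iff.mp h).1

lemma eq_of_columnColor_eq {u v : ColumnLabel} {p q p' q' : ℕ} (hp : p ≠ p') (hq : q ≠ q')
    (h : columnColor u p = columnColor v q) (h' : columnColor u p' = columnColor v q') :
    u = v := by
  rcases u with x | ℓ <;> rcases v with y | ℓ'
  · obtain rfl := (axisLineThrough_eq_iff.mp h).1
    obtain rfl := (axisLineThrough_eq_iff.mp h').1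
    exact congrArg Sum.inl (eq_of_axisLineThrough_eq hp h h')
  · exact absurd (columnColor_inl_injective x (h.trans h'.symm)) hp
  · exact absurd (columnColor_inl_injective y (h.symm.trans h')) hq
  · exact congrArg Sum.inr h

/-- The partition of `ℕ × ℕ` into the colour classes of `columnColor`, with columns labelled by `e`
and colours enumerated by `d`. -/
def linePartition (e : ℕ ≃ ColumnLabel) (d : ℕ ≃ AxisLine ℕ ℕ) (n : ℕ) : Set (ℕ × ℕ) :=
  {p | columnColor (e p.1) p.2 = d n}

variable (e : ℕ ≃ ColumnLabel) (d : ℕ ≃ AxisLine ℕ ℕ)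

lemma isPartition_linePartition : IsPartition (linePartition e d) := by
  refine ⟨fun n => ?_, fun i j hij => ?_, ?_⟩
  · refine infinite_of_injective_forall_mem
      (Prod.mk_right_injective (e.symm (Sum.inr (d n)))) fun i => ?_
    simp [linePartition, columnColor]
  · refine eq_empty_of_forall_notMem fun p hp => hij (d.injective ?_)
    exact hp.1.symm.trans hp.2
  · exact eq_univ_of_forall fun p =>
      mem_iUnion.mpr ⟨d.symm (columnColor (e p.1) p.2), (d.apply_symm_apply _).symm⟩

lemma not_isMonoTower_linePartition {κ lam : ℕ∞} (hκ : 1 < κ) (hlam : 1 < lam)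
    (T : Set (Set (ℕ × ℕ))) : ¬ IsMonoTower (linePartition e d) κ lam T := by
  intro hT
  obtain ⟨x, y, p, q, p', q', n, n', hxy, hp, hq, hxp, hyq, hxp', hyq'⟩ :=
    hT.exists_two_columns hκ hlam
  exact hxy (e.injective (eq_of_columnColor_eq hp hq (hxp.trans hyq.symm) (hxp'.trans hyq'.symm)))

lemma totGraph_notMem_EDPart_linePartition {g : ℕ → ℕ} (hg : (range g).Finite) :
    totGraph g ∉ EDPart (linePartition e d) := by
  rintro ⟨m, hm⟩
  let column : (ℕ →₀ ℕ) → ℕ := fun x => e.symm (Sum.inl x)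
  have column_injective : Function.Injective column := e.symm.injective.comp Sum.inl_injective
  have rich_infinite := infinite_setOf_lt_encard_axisLineThrough_eq (r := g ∘ column)
    (hg.subset (range_comp_subset_range column g)) m
  refine rich_infinite.preimage (d.surjective.range_eq ▸ subset_univ _) (hm.subset fun n hn => ?_)
  have maps_to : MapsTo (fun x => (column x, g (column x)))
      {x | axisLineThrough x (g (column x)) = d n} (totGraph g ∩ linePartition e d n) :=
    fun x hx => ⟨rfl, by simpa [linePartition, columnColor, column] using hx⟩
  exact lt_of_lt_of_le hn (encard_le_encard_of_injOn maps_to fun x _ y _ hxy =>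
    column_injective (congrArg Prod.fst hxy))

lemma not_isPJIdeal_SelI_EDPart_linePartition :
    ¬ IsPJIdeal SelI (EDPart (linePartition e d)) := by
  intro hP
  obtain ⟨g, hg, hgE⟩ :=
    hP.exists_finite_range_totGraph_mem (isLowerSet_EDPart _) (supClosed_EDPart _)
  exact totGraph_notMem_EDPart_linePartition e d hg hgE

end LinePartition

theorem stmt19_general :
    ∃ E : ℕ → Set (ℕ × ℕ), IsPartition E ∧
      (∀ κ lam : ℕ∞, 1 < κ → 1 < lam → ∀ T : Set (Set (ℕ × ℕ)), ¬ IsMonoTower E κ lam T) ∧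
      ¬ IsPJIdeal SelI (SelPart E) ∧ ¬ IsPJIdeal SelI (EDPart E) := by
  obtain ⟨e⟩ : Nonempty (ℕ ≃ ColumnLabel) := nonempty_equiv_of_countable
  obtain ⟨d⟩ : Nonempty (ℕ ≃ AxisLine ℕ ℕ) := nonempty_equiv_of_countable
  have not_ED := not_isPJIdeal_SelI_EDPart_linePartition e d
  exact ⟨linePartition e d, isPartition_linePartition e d,
    fun _ _ hκ hlam => not_isMonoTower_linePartition e d hκ hlam,
    fun hSel => not_ED (hSel.mono (SelPart_subset_EDPart _)), not_ED⟩

theorem stmt19 :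
    ∃ E : ℕ → Set (ℕ × ℕ), IsPartition E ∧
      (∀ k : ℕ, 3 ≤ k → ∀ T : Set (Set (ℕ × ℕ)),
        ¬ IsMonoTower E (k : ℕ∞) (k : ℕ∞) T) ∧
      ¬ IsPJIdeal SelI (SelPart E) ∧ ¬ IsPJIdeal SelI (EDPart E) := by
  obtain ⟨E, hE, no_tower, not_ideal⟩ := stmt19_general
  have one_lt_cast {k : ℕ} (hk : 3 ≤ k) : (1 : ℕ∞) < k := by exact_mod_cast (by omega : 1 < k)
  exact ⟨E, hE, fun k hk => no_tower k k (one_lt_cast hk) (one_lt_cast hk), not_ideal⟩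
end
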